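/- Every finite-dimensional complex semisimple Lie algebra is rigid: if μ ∈ Lⁿ is a Lie algebra law such that the Lie algebra (ℂⁿ, μ) is semisimple, then the orbit O(μ) is open in Lⁿ. -/

import Mathlib

/-!
Semisimple laws are rigid because their second adjoint cohomology vanishes, and the vanishing is
witnessed by an explicit homotopy.

By Cartan's criterion the Killing form `κ` of `L` is nondegenerate. Let `(bᵢ)` be a basis and `(aᵢ)`
its `κ`-dual basis. The Casimir tensor `∑ aᵢ ⊗ bᵢ` is invariant and acts as the identity on the
adjoint representation (`exists_casimir`). Consequently `(hφ)(Y) = ∑ [aᵢ, φ(bᵢ, Y)]` is a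
contracting homotopy in degree two: `φ = δ(hφ) - ∑ [aᵢ, (δφ)(bᵢ, ·, ·)]` for every alternating `φ`
(`CasimirData.homotopy_formula`). In particular `P = δh` is a projection onto the coboundaries.

The derivative of `(f, w) ↦ f*(μ + (1 - P) w)` at `(1, 0)` is `(g, w) ↦ δg + (1 - P) w`, which is
surjective. By the inverse function theorem every `ν` close to `μ` is `f*(μ + w)` with `f`
invertible, `P w = 0` and `w` small. If `ν` is a Lie law, so is `μ + w`, that is `δw = -w∘w`, and
the homotopy formula gives `w = ∑ [aᵢ, (w∘w)(bᵢ, ·, ·)]`. Hence `‖w‖ ≤ K ‖w‖ ^ 2`, which forces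
`w = 0` (`CasimirData.eq_zero_of_proj_eq_zero`), and `ν` lies in the orbit of `μ`
(`eventually_mem_orbit`). The same applies at every other point of the orbit, which is again
isomorphic to `L`.
-/

set_option synthInstance.maxHeartbeats 400000
set_option maxHeartbeats 1000000

noncomputable section

abbrev E (n : ℕ) : Type := Fin n → ℂ

abbrev Bil (n : ℕ) : Type := E n →L[ℂ] E n →L[ℂ] E n

/-- A bilinear map is alternating. -/
def IsAlt {n : ℕ} (μ : Bil n) : Prop := ∀ X, μ X X = 0

/-- The Jacobi identity. -/
def Jacobi {n : ℕ} (μ : Bil n) : Prop :=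
  ∀ X Y Z, μ X (μ Y Z) + μ Y (μ Z X) + μ Z (μ X Y) = 0

/-- `Lⁿ`, the set of Lie algebra laws on `ℂⁿ`. -/
def LieLaw (n : ℕ) : Set (Bil n) := {μ | IsAlt μ ∧ Jacobi μ}

/-- The orbit of a law under the action `(f*μ)(X,Y) = f⁻¹(μ(f X, f Y))` of `GL(n,ℂ)`. -/
def orbit {n : ℕ} (μ : Bil n) : Set (Bil n) :=
  {ν | ∃ f : E n ≃L[ℂ] E n, ∀ X Y, ν X Y = f.symm (μ (f X) (f Y))}

/-- The Gerstenhaber trilinear product `(φ∘ψ)(X,Y,Z)`. -/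
def circ {n : ℕ} (φ ψ : Bil n) (X Y Z : E n) : E n :=
  φ (ψ X Y) Z + φ (ψ Y Z) X + φ (ψ Z X) Y

/-- `Z²(μ,μ)`: alternating 2-cochains with `δ_μφ = μ∘φ + φ∘μ = 0`. -/
def Z2 {n : ℕ} (μ : Bil n) : Set (Bil n) :=
  {φ | IsAlt φ ∧ ∀ X Y Z, circ μ φ X Y Z + circ φ μ X Y Z = 0}

/-- The coboundary `δ_μ g`, for `g` an endomorphism:
`(δ_μ g)(X,Y) = −g(μ(X,Y)) + μ(g X, Y) + μ(X, g Y)`. -/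
def delta1 {n : ℕ} (μ : Bil n) (g : E n →L[ℂ] E n) : Bil n :=
  μ.comp g + (μ.flip.comp g).flip -
    (ContinuousLinearMap.compL ℂ (E n) (E n) (E n) g).comp μ

lemma delta1_apply {n : ℕ} (μ : Bil n) (g : E n →L[ℂ] E n) (X Y : E n) :
    delta1 μ g X Y = -g (μ X Y) + μ (g X) Y + μ X (g Y) := by
  simp [delta1]; ring

/-- `B²(μ,μ)`, the set of coboundaries. -/
def B2 {n : ℕ} (μ : Bil n) : Set (Bil n) := Set.range (delta1 μ)

/-- `f*μ`, defined using `Ring.inverse` so that it is defined for any `f`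
(it agrees with the natural action when `f` is invertible). -/
def conj {n : ℕ} (f : E n →L[ℂ] E n) (μ : Bil n) : Bil n :=
  (((((ContinuousLinearMap.compL ℂ (E n) (E n) (E n) (Ring.inverse f)).comp μ).flip).comp
    f).flip).comp f

lemma conj_apply {n : ℕ} (f : E n →L[ℂ] E n) (μ : Bil n) (X Y : E n) :
    conj f μ X Y = Ring.inverse f (μ (f X) (f Y)) := rfl

open Filter Topology

/-! ### The Casimir tensor of the Killing form -/

/-- Existence of the Casimir tensor `∑ aᵢ ⊗ bᵢ` of the Killing form: it is invariant (second claim,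
phrased through an arbitrary bilinear map `T` out of `L × L`), and it acts on the adjoint
representation as the identity, because `κ(∑ [aᵢ, [bᵢ, x]], y) = tr(ad y ∘ ad x) = κ(x, y)`. -/
theorem exists_casimir (L : Type) [LieRing L] [LieAlgebra ℂ L] [Module.Finite ℂ L]
    [LieAlgebra.IsKilling ℂ L] :
    ∃ (m : ℕ) (a b : Fin m → L), (∀ x : L, ∑ i, ⁅a i, ⁅b i, x⁆⁆ = x) ∧
      ∀ (V : Type) [AddCommGroup V] [Module ℂ V] (T : L →ₗ[ℂ] L →ₗ[ℂ] V) (y : L),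
        ∑ i, (T ⁅a i, y⁆ (b i) + T (a i) ⁅b i, y⁆) = 0 := by
  have hnd : (killingForm ℂ L).Nondegenerate := LieAlgebra.IsKilling.killingForm_nondegenerate ℂ L
  let b := Module.finBasis ℂ L
  let a := LinearMap.BilinForm.dualBasis (killingForm ℂ L) hnd b
  have hab (i j) : killingForm ℂ L (a i) (b j) = if j = i then 1 else 0 :=
    LinearMap.BilinForm.apply_dualBasis_left hnd b i j
  have hinv (x y z : L) : killingForm ℂ L ⁅x, y⁆ z = killingForm ℂ L x ⁅y, z⁆ :=
    LieModule.traceForm_apply_lie_apply ℂ L L x y z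
  have hb (i) (x : L) : b.repr x i = killingForm ℂ L (a i) x := by
    conv_rhs => rw [← b.sum_repr x]
    simp only [map_sum, map_smul, hab, smul_eq_mul, mul_ite, mul_one, mul_zero]
    simp
  have ha (i) (x : L) : a.repr x i = killingForm ℂ L x (b i) := by
    conv_rhs => rw [← a.sum_repr x]
    simp only [map_sum, map_smul, LinearMap.sum_apply, LinearMap.smul_apply, hab, smul_eq_mul,
      mul_ite, mul_one, mul_zero]
    simp
  refine ⟨_, a, b, fun x ↦ ?_, fun V _ _ T y ↦ ?_⟩
  · have key (y : L) : killingForm ℂ L (∑ i, ⁅a i, ⁅b i, x⁆⁆) y = killingForm ℂ L x y := by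
      rw [map_sum, LinearMap.sum_apply, LieModule.traceForm_comm ℂ L L x y,
        LieModule.traceForm_apply_apply, LinearMap.trace_eq_matrix_trace ℂ b, Matrix.trace]
      refine Finset.sum_congr rfl fun i _ ↦ ?_
      rw [hinv, Matrix.diag_apply, LinearMap.toMatrix_apply, hb]
      congr 1
      simp only [LinearMap.comp_apply, LieModule.toEnd_apply_apply]
      rw [← lie_skew y, ← lie_skew (b i) x, neg_lie]
    refine sub_eq_zero.mp (hnd.1 _ fun y ↦ ?_)
    rw [map_sub, LinearMap.sub_apply, key, sub_self]
  · have h1 (i) : T ⁅a i, y⁆ (b i) = ∑ j, -(killingForm ℂ L (a i) ⁅b j, y⁆ • T (a j) (b i)) := by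
      conv_lhs => rw [← a.sum_repr ⁅a i, y⁆]
      rw [map_sum, LinearMap.sum_apply]
      refine Finset.sum_congr rfl fun j _ ↦ ?_
      rw [ha, hinv, ← lie_skew, map_neg, neg_smul, map_neg, map_smul]
      simp only [LinearMap.neg_apply, LinearMap.smul_apply]
    have h2 (i) : T (a i) ⁅b i, y⁆ = ∑ j, killingForm ℂ L (a j) ⁅b i, y⁆ • T (a i) (b j) := by
      conv_lhs => rw [← b.sum_repr ⁅b i, y⁆]
      simp [hb]
    simp only [h1, h2, Finset.sum_add_distrib, Finset.sum_neg_distrib]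
    rw [Finset.sum_comm]
    simp

variable {n : ℕ}

/-- A Casimir tensor `∑ aᵢ ⊗ bᵢ` for the law `μ` on `ℂⁿ`: it acts as the identity in the adjoint
representation, and it is invariant. Invariance is tested against bilinear maps with values in
`ℂⁿ`, the only ones that occur. -/
structure CasimirData (μ : Bil n) (m : ℕ) where
  a : Fin m → E n
  b : Fin m → E n
  casimir : ∀ x, ∑ i, μ (a i) (μ (b i) x) = x
  invariant : ∀ (T : E n →ₗ[ℂ] E n →ₗ[ℂ] E n) (y : E n),
        ∑ i, (T (μ (a i) y) (b i) + T (a i) (μ (b i) y)) = 0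

theorem exists_casimirData (μ : Bil n) (L : Type) [LieRing L] [LieAlgebra ℂ L]
    [LieAlgebra.IsSemisimple ℂ L]
    (e : L ≃ₗ[ℂ] E n) (he : ∀ x y : L, e ⁅x, y⁆ = μ (e x) (e y)) :
    ∃ m, Nonempty (CasimirData μ m) := by
  have : Module.Finite ℂ L := Module.Finite.equiv e.symm
  obtain ⟨m, a, b, h1, h2⟩ := exists_casimir L
  refine ⟨m, ⟨⟨fun i ↦ e (a i), fun i ↦ e (b i), fun x ↦ ?_, fun T y ↦ ?_⟩⟩⟩
  · obtain ⟨x, rfl⟩ := e.surjective x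
    simp only [← he, ← map_sum, h1]
  · obtain ⟨y, rfl⟩ := e.surjective y
    simpa [he] using h2 (E n) (T.compl₁₂ e.toLinearMap e.toLinearMap) y

/-! ### The contracting homotopy on 2-cochains -/

theorem IsAlt.swap {φ : Bil n} (h : IsAlt φ) (X Y : E n) : φ X Y = -φ Y X := by
  have := h (X + Y)
  simp only [map_add, add_apply, h X, h Y, zero_add, add_zero] at this
  exact eq_neg_of_add_eq_zero_right this

theorem Jacobi.circ_self {μ : Bil n} (ha : IsAlt μ) (h : Jacobi μ) (X Y Z : E n) :
    circ μ μ X Y Z = 0 := by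
  rw [circ, ha.swap (μ X Y) Z, ha.swap (μ Y Z) X, ha.swap (μ Z X) Y, ← neg_eq_zero, ← h X Y Z]
  abel

namespace CasimirData

variable {μ : Bil n} {m : ℕ} (c : CasimirData μ m)

/-- The contracting homotopy `(hφ)(Y) = ∑ [aᵢ, φ(bᵢ, Y)]` from 2-cochains to 1-cochains. -/
def homotopy : Bil n →L[ℂ] E n →L[ℂ] E n :=
  ∑ i, (ContinuousLinearMap.compL ℂ (E n) (E n) (E n) (μ (c.a i))).comp
    (ContinuousLinearMap.apply ℂ (E n →L[ℂ] E n) (c.b i))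

theorem homotopy_apply (φ : Bil n) (Y : E n) :
    c.homotopy φ Y = ∑ i, μ (c.a i) (φ (c.b i) Y) := by
  simp [homotopy]

/-- The homotopy formula `φ = δ(hφ) - ∑ [aᵢ, (δφ)(bᵢ, ·, ·)]`, where `δφ = μ∘φ + φ∘μ`. It
implies `H²(μ, μ) = 0`. -/
theorem homotopy_formula (hμ : μ ∈ LieLaw n) {φ : Bil n} (hφ : IsAlt φ) (Y Z : E n) :
    φ Y Z = delta1 μ (c.homotopy φ) Y Z -
      ∑ i, μ (c.a i) (circ μ φ (c.b i) Y Z + circ φ μ (c.b i) Y Z) := by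
  -- invariance of the Casimir tensor, tested on `(u, v) ↦ [u, φ(v, Z)]`
  have inv (Y Z : E n) :
      ∑ i, (μ (μ (c.a i) Y) (φ (c.b i) Z) + μ (c.a i) (φ (μ (c.b i) Y) Z)) = 0 := by
    let T : E n →ₗ[ℂ] E n →ₗ[ℂ] E n := LinearMap.mk₂ ℂ (fun u v ↦ μ u (φ v Z))
      (by simp) (by simp) (by simp) (by simp)
    exact c.invariant T Y
  rw [delta1_apply]
  simp only [homotopy_apply, map_sum, sum_apply]
  conv_lhs => rw [← c.casimir (φ Y Z), ← sub_zero (∑ i, _), ← inv Y Z, ← add_zero (_ - _), ← inv Z Y]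
  simp only [← Finset.sum_add_distrib, ← Finset.sum_sub_distrib, ← Finset.sum_neg_distrib]
  refine Finset.sum_congr rfl fun i _ ↦ ?_
  have J := hμ.2
  have S := hμ.1.swap
  have S' := hφ.swap
  generalize c.a i = a
  generalize c.b i = b
  -- `ad a` and `ad U` commute up to `ad [a, U]`
  have j (U V : E n) : μ (μ a U) (φ b V) = μ a (μ U (φ b V)) - μ U (μ a (φ b V)) := by
    have := J U a (φ b V)
    rw [S (φ b V) U, S (φ b V) (μ U a), S U a, map_neg, map_neg, neg_apply, neg_neg] at this
    linear_combination this
  simp only [circ, map_add]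
  rw [j, j, S (φ b Y) Z, S (φ Y Z) b, S' Z b, S' (μ Y Z) b, S Z b, S (μ a _) Z]
  simp only [map_neg, neg_apply]
  rw [S (φ b Z) Y]
  simp only [map_neg]
  abel


theorem delta1_isAlt (hμ : IsAlt μ) (g : E n →L[ℂ] E n) : IsAlt (delta1 μ g) := by
  intro X
  rw [delta1_apply, hμ X, hμ.swap (g X) X]
  simp

theorem delta1_mem_Z2 (hμ : μ ∈ LieLaw n) (g : E n →L[ℂ] E n) : delta1 μ g ∈ Z2 μ := by
  refine ⟨delta1_isAlt hμ.1 g, fun X Y Z ↦ ?_⟩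
  have C := Jacobi.circ_self hμ.1 hμ.2
  have h0 := congrArg g (C X Y Z)
  have h1 := C (g X) Y Z
  have h2 := C X (g Y) Z
  have h3 := C X Y (g Z)
  simp only [circ, map_add, map_zero] at h0 h1 h2 h3
  simp only [circ, delta1_apply, map_add, map_neg, add_apply, neg_apply]
  linear_combination h1 + h2 + h3 - h0

/-- The operator `φ ↦ δ(hφ)`, which is a projection of the space of bilinear maps onto the
coboundaries. -/
def proj : Bil n →L[ℂ] Bil n :=
  LinearMap.toContinuousLinearMap
    { toFun := fun φ ↦ delta1 μ (c.homotopy φ)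
      map_add' := fun φ ψ ↦ by
        ext1 X; ext1 Y; simp only [delta1_apply, map_add, add_apply]; abel
      map_smul' := fun r φ ↦ by
        ext1 X; ext1 Y
        simp only [delta1_apply, map_smul, smul_apply, RingHom.id_apply, smul_add, smul_neg] }

theorem proj_apply (φ : Bil n) : c.proj φ = delta1 μ (c.homotopy φ) := rfl

theorem proj_delta1 (hμ : μ ∈ LieLaw n) (g : E n →L[ℂ] E n) :
    c.proj (delta1 μ g) = delta1 μ g := by
  have hz := delta1_mem_Z2 hμ g
  ext1 Y; ext1 Z
  rw [c.homotopy_formula hμ hz.1 Y Z]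
  simp [hz.2, proj_apply]

/-- For `w` in the kernel of the projection, the Jacobi identity `δw = -w∘w` of `μ + w` turns the
homotopy formula into an expression of `w` as a quadratic function of itself. -/
theorem eq_of_proj_eq_zero (hμ : μ ∈ LieLaw n) {w : Bil n} (hw : c.proj w = 0)
    (hν : μ + w ∈ LieLaw n) (Y Z : E n) :
    w Y Z = ∑ i, μ (c.a i) (circ w w (c.b i) Y Z) := by
  have hwa : IsAlt w := fun X ↦ by simpa [hμ.1 X] using hν.1 X
  rw [c.homotopy_formula hμ hwa Y Z, ← proj_apply, hw, zero_apply, zero_apply, zero_sub,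
    ← Finset.sum_neg_distrib]
  refine Finset.sum_congr rfl fun i _ ↦ ?_
  rw [← map_neg]
  congr 1
  have h1 := Jacobi.circ_self hν.1 hν.2 (c.b i) Y Z
  have h2 := Jacobi.circ_self hμ.1 hμ.2 (c.b i) Y Z
  simp only [circ, add_apply, map_add] at h1 h2 ⊢
  linear_combination h2 - h1

theorem norm_circ_le (w : Bil n) (X Y Z : E n) :
    ‖circ w w X Y Z‖ ≤ 3 * ‖w‖ ^ 2 * ‖X‖ * ‖Y‖ * ‖Z‖ := by
  have h (X Y Z : E n) : ‖w (w X Y) Z‖ ≤ ‖w‖ ^ 2 * ‖X‖ * ‖Y‖ * ‖Z‖ :=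
    calc ‖w (w X Y) Z‖ ≤ ‖w‖ * ‖w X Y‖ * ‖Z‖ := w.le_opNorm₂ _ _
      _ ≤ ‖w‖ * (‖w‖ * ‖X‖ * ‖Y‖) * ‖Z‖ := by gcongr; exact w.le_opNorm₂ _ _
      _ = _ := by ring
  calc _ ≤ ‖w (w X Y) Z‖ + ‖w (w Y Z) X‖ + ‖w (w Z X) Y‖ := norm_add₃_le
    _ ≤ _ := by linarith [h X Y Z, h Y Z X, h Z X Y]

set_option maxSynthPendingDepth 5 in
/-- The kernel of the projection is a slice: it contains no small nonzero `w` for which `μ + w`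
is a Lie law, since such a `w` satisfies `‖w‖ ≤ K ‖w‖ ^ 2`. -/
theorem eq_zero_of_proj_eq_zero (hμ : μ ∈ LieLaw n) :
    ∃ K : ℝ, ∀ w : Bil n, c.proj w = 0 → μ + w ∈ LieLaw n → K * ‖w‖ < 1 → w = 0 := by
  refine ⟨∑ i, ‖μ (c.a i)‖ * 3 * ‖c.b i‖, fun w hw hν hlt ↦ ?_⟩
  set K := ∑ i, ‖μ (c.a i)‖ * 3 * ‖c.b i‖ with hK
  have hK0 : 0 ≤ K := by positivity
  have hle : ‖w‖ ≤ K * ‖w‖ ^ 2 := by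
    refine w.opNorm_le_bound₂ (by positivity) fun Y Z ↦ ?_
    rw [c.eq_of_proj_eq_zero hμ hw hν Y Z, hK, Finset.sum_mul, Finset.sum_mul, Finset.sum_mul]
    refine norm_sum_le_of_le _ fun i _ ↦ ?_
    calc _ ≤ ‖μ (c.a i)‖ * ‖circ w w (c.b i) Y Z‖ := (μ (c.a i)).le_opNorm _
      _ ≤ ‖μ (c.a i)‖ * (3 * ‖w‖ ^ 2 * ‖c.b i‖ * ‖Y‖ * ‖Z‖) := by
        gcongr; exact norm_circ_le w _ _ _
      _ = _ := by ring
  by_contra h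
  have : 0 < ‖w‖ := norm_pos_iff.mpr h
  nlinarith

end CasimirData

/-! ### The local structure of the orbit -/

set_option maxSynthPendingDepth 5 in
/-- The action map `(f, ν) ↦ f*ν` is strictly differentiable at `(1, μ)`, with derivative
`(g, w) ↦ δg + w`. -/
theorem hasStrictFDerivAt_conj (μ : Bil n) :
    ∃ D : ((E n →L[ℂ] E n) × Bil n) →L[ℂ] Bil n,
      HasStrictFDerivAt (fun p : (E n →L[ℂ] E n) × Bil n ↦ conj p.1 p.2) D (1, μ) ∧
      ∀ g w, D (g, w) = delta1 μ g + w := by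
  let F := (ContinuousLinearMap.flipₗᵢ ℂ (E n) (E n) (E n)).toContinuousLinearEquiv
  have h1 : HasStrictFDerivAt (fun p : (E n →L[ℂ] E n) × Bil n ↦ p.1) _ (1, μ) :=
    hasStrictFDerivAt_fst (𝕜 := ℂ)
  have h2 : HasStrictFDerivAt (fun p : (E n →L[ℂ] E n) × Bil n ↦ p.2) _ (1, μ) :=
    hasStrictFDerivAt_snd (𝕜 := ℂ)
  have h3 : HasStrictFDerivAt (fun p : (E n →L[ℂ] E n) × Bil n ↦ Ring.inverse p.1) _ (1, μ) :=
    (hasStrictFDerivAt_ringInverse (𝕜 := ℂ) (1 : (E n →L[ℂ] E n)ˣ)).comp (1, μ) h1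
  have h4 := ((ContinuousLinearMap.compL ℂ (E n) (E n) (E n)).hasStrictFDerivAt.comp
    (1, μ) h3).clm_comp h2
  have h5 := (F.hasStrictFDerivAt.comp (1, μ) h4).clm_comp h1
  have h6 := (F.hasStrictFDerivAt.comp (1, μ) h5).clm_comp h1
  refine ⟨_, h6, fun g w ↦ ?_⟩
  ext1 X; ext1 Y
  simp [F, delta1_apply]
  abel

theorem conj_mem_orbit (μ : Bil n) (u : (E n →L[ℂ] E n)ˣ) : conj u μ ∈ orbit μ :=
  ⟨ContinuousLinearEquiv.ofUnit u, fun X Y ↦ by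
    rw [conj_apply, Ring.inverse_unit]
    rfl⟩

theorem mem_LieLaw_of_mem_orbit {μ ν : Bil n} (hν : ν ∈ orbit μ) (h : μ ∈ LieLaw n) :
    ν ∈ LieLaw n := by
  obtain ⟨f, hf⟩ := hν
  refine ⟨fun X ↦ by rw [hf, h.1, map_zero], fun X Y Z ↦ ?_⟩
  simp only [hf, f.apply_symm_apply, ← map_add, h.2 (f X) (f Y) (f Z), map_zero]

theorem orbit_symm {μ ν : Bil n} (hν : ν ∈ orbit μ) : μ ∈ orbit ν := by
  obtain ⟨f, hf⟩ := hν
  exact ⟨f.symm, fun X Y ↦ by simp [hf]⟩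

theorem orbit_trans {μ ν ξ : Bil n} (hν : ν ∈ orbit μ) (hξ : ξ ∈ orbit ν) : ξ ∈ orbit μ := by
  obtain ⟨f, hf⟩ := hν
  obtain ⟨g, hg⟩ := hξ
  exact ⟨g.trans f, fun X Y ↦ by simp [hf, hg]⟩

set_option maxSynthPendingDepth 5 in
/-- All Lie laws close to `μ` lie in its orbit. With `Q = 1 - δh`, the map
`(f, w) ↦ f*(μ + Q w)` is open at `(1, 0)`, so a nearby law has the form `f*(μ + Q w)` with `f`
invertible and `Q w` small; then `μ + Q w` is a Lie law and `Q w = 0`. -/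
theorem eventually_mem_orbit {μ : Bil n} (hμ : μ ∈ LieLaw n) {m : ℕ} (c : CasimirData μ m) :
    ∀ᶠ ν in 𝓝 μ, ν ∈ LieLaw n → ν ∈ orbit μ := by
  obtain ⟨D, hD, hDa⟩ := hasStrictFDerivAt_conj μ
  obtain ⟨K, hK⟩ := c.eq_zero_of_proj_eq_zero hμ
  let Q : Bil n →L[ℂ] Bil n := ContinuousLinearMap.id ℂ (Bil n) - c.proj
  have hQ (w) : Q w = w - c.proj w := rfl
  have hPQ (w) : c.proj (Q w) = 0 := by
    rw [hQ, map_sub, c.proj_apply w, c.proj_delta1 hμ, sub_self]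
  have hs : HasStrictFDerivAt (fun p : (E n →L[ℂ] E n) × Bil n ↦ (p.1, μ + Q p.2))
      ((ContinuousLinearMap.fst ℂ _ _).prod (Q.comp (ContinuousLinearMap.snd ℂ _ _))) (1, 0) :=
    hasStrictFDerivAt_fst.prodMk
      ((Q.hasStrictFDerivAt.comp (1, 0) hasStrictFDerivAt_snd).const_add μ)
  have hD' : HasStrictFDerivAt (fun p : (E n →L[ℂ] E n) × Bil n ↦ conj p.1 p.2) D
      ((1 : E n →L[ℂ] E n), μ + Q 0) := by simpa using hD
  have hmap := (hD'.comp (1, 0) hs).map_nhds_eq_of_surj (by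
    refine LinearMap.range_eq_top.mpr fun φ ↦ ⟨(c.homotopy φ, φ), ?_⟩
    change D (c.homotopy φ, Q φ) = φ
    rw [hDa, hQ, c.proj_apply]
    abel)
  have hval : conj (1 : E n →L[ℂ] E n) (μ + Q 0) = μ := by
    ext1 X; ext1 Y
    simp [conj_apply]
  simp only [hval] at hmap
  rw [← hmap, eventually_map]
  have e1 : ∀ᶠ p : (E n →L[ℂ] E n) × Bil n in 𝓝 (1, 0), IsUnit p.1 :=
    continuous_fst.continuousAt.eventually (Units.isOpen.mem_nhds (by simp))
  have e2 : ∀ᶠ p : (E n →L[ℂ] E n) × Bil n in 𝓝 (1, 0), K * ‖Q p.2‖ < 1 := by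
    have : Continuous fun p : (E n →L[ℂ] E n) × Bil n ↦ K * ‖Q p.2‖ := by fun_prop
    exact this.continuousAt.eventually_lt continuousAt_const (by simp)
  filter_upwards [e1, e2] with p h1 h2 hlaw
  obtain ⟨u, hu⟩ := h1
  rw [← hu] at hlaw ⊢
  have horb := conj_mem_orbit (μ + Q p.2) u
  have := hK _ (hPQ p.2) (mem_LieLaw_of_mem_orbit (orbit_symm horb) hlaw) h2
  simpa [this] using horb

/-- every finite-dimensional complex semisimple Lie algebra is rigid: if the
Lie algebra `(ℂⁿ, μ)` is semisimple then the orbit `O(μ)` is open in `Lⁿ`. -/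
theorem stmt19 (n : ℕ) (μ : Bil n) (hμ : μ ∈ LieLaw n)
    (L : Type) (instLR : LieRing L) (instLA : LieAlgebra ℂ L)
    (hss : LieAlgebra.IsSemisimple ℂ L)
    (e : L ≃ₗ[ℂ] E n) (he : ∀ x y : L, e ⁅x, y⁆ = μ (e x) (e y)) :
    IsOpen {ν : LieLaw n | (ν : Bil n) ∈ orbit μ} := by
  rw [isOpen_iff_eventually]
  intro ν hν
  have hν' : (ν : Bil n) ∈ orbit μ := hν
  obtain ⟨f, hf⟩ := hν
  -- `ν` is isomorphic to `L` too, so the local statement applies at `ν` itself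
  obtain ⟨m, ⟨c⟩⟩ := exists_casimirData (ν : Bil n) L (e.trans f.symm.toLinearEquiv)
    fun x y ↦ by simp [he, hf]
  filter_upwards [continuous_subtype_val.continuousAt.eventually
    (eventually_mem_orbit ν.2 c)] with ξ hξ
  exact orbit_trans hν' (hξ ξ.2)
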